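/- (Axis of Evil Theorem for points.) Let X ⊂ k^n be a finite set of distinct points and I = I(X) its vanishing ideal, and fix the lexicographical order induced by x_1 < … < x_n. Then for every monomial τ = x_1^{d_1}⋯x_n^{d_n} in the minimal generating set G(T(I)) of the semigroup ideal T(I) of leading monomials, there exist polynomials g_{m,δ} ∈ k[x_1,…,x_{m−1}] (for 1 ≤ m ≤ n and 1 ≤ δ ≤ d_m) such that the product f_τ := Π_{m=1}^{n} Π_{δ=1}^{d_m} ( x_m − g_{m,δ} ) belongs to I and has leading monomial T(f_τ) = τ; moreover the set {f_τ : τ ∈ G(T(I))} is a minimal Gröbner basis of I with respect to the lexicographical order. -/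

import Mathlib

/-!  STATEMENT 7.  (Axis of Evil Theorem for points.)
Let `X ⊂ k^n` be a finite set of distinct points, `I = I(X)` and fix the lex order
induced by `x_1 < … < x_n`.  For every `τ = x_1^{d_1}⋯x_n^{d_n}` in the minimal
generating set `G(T(I))` there are polynomials `g_{m,δ} ∈ k[x_1,…,x_{m−1}]`
(`1 ≤ m ≤ n`, `1 ≤ δ ≤ d_m`) such that `f_τ := Π_m Π_δ (x_m − g_{m,δ}) ∈ I` with
leading monomial `τ`; moreover `{f_τ : τ ∈ G(T(I))}` is a minimal Gröbner basis. -/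

open MvPolynomial

/-- Lexicographical order induced by `x_1 < … < x_n` on exponent vectors. -/
def lexLt {n : ℕ} (a b : Fin n →₀ ℕ) : Prop :=
  ∃ j : Fin n, a j < b j ∧ ∀ i : Fin n, j < i → a i = b i

/-- `m` is the lex-leading monomial (exponent vector) of `f`. -/
def IsLeadMon {n : ℕ} {k : Type*} [Field k]
    (f : MvPolynomial (Fin n) k) (m : Fin n →₀ ℕ) : Prop :=
  m ∈ f.support ∧ ∀ e ∈ f.support, e ≠ m → lexLt e m

/-- `T(I)`: the set of lex-leading monomials of nonzero elements of `I`. -/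
def LTset {n : ℕ} {k : Type*} [Field k]
    (I : Ideal (MvPolynomial (Fin n) k)) : Set (Fin n →₀ ℕ) :=
  {m | ∃ f ∈ I, f ≠ 0 ∧ IsLeadMon f m}

/-- Minimal monomial generating set of a semigroup ideal of monomials:
its divisibility-minimal elements. -/
def minBasis {n : ℕ} (S : Set (Fin n →₀ ℕ)) : Set (Fin n →₀ ℕ) :=
  {m ∈ S | ∀ m' ∈ S, (∃ u, m = m' + u) → m' = m}

theorem lexLt_add_left' {n : ℕ} {a b : Fin n →₀ ℕ} (c : Fin n →₀ ℕ) (h : lexLt a b) :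
    lexLt (a + c) (b + c) := by
  obtain ⟨j, h1, h2⟩ := h
  exact ⟨j, by simpa using h1, fun i hi => by simp [h2 i hi]⟩

theorem lexLt_trans' {n : ℕ} {a b c : Fin n →₀ ℕ} (h : lexLt a b) (h' : lexLt b c) :
    lexLt a c := by
  obtain ⟨j, h1, h2⟩ := h
  obtain ⟨l, h3, h4⟩ := h'
  rcases lt_trichotomy j l with hl | hl | hl
  · exact ⟨l, by rw [h2 l hl]; exact h3, fun i hi => (h2 i (hl.trans hi)).trans (h4 i hi)⟩
  · subst hl
    exact ⟨j, h1.trans h3, fun i hi => (h2 i hi).trans (h4 i hi)⟩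
  · exact ⟨j, by rw [← h4 j hl]; exact h1, fun i hi => (h2 i hi).trans (h4 i (hl.trans hi))⟩

theorem lexLt_irrefl' {n : ℕ} {a : Fin n →₀ ℕ} (h : lexLt a a) : False := by
  obtain ⟨j, h1, _⟩ := h
  exact lt_irrefl _ h1

theorem lexLt_add_aux {n : ℕ} {a b c d : Fin n →₀ ℕ} (h : c ≠ a → lexLt c a)
    (h' : d ≠ b → lexLt d b) (hne : ¬ (c = a ∧ d = b)) : lexLt (c + d) (a + b) := by
  by_cases hc : c = a
  · subst hc
    have := lexLt_add_left' c (h' (fun hd => hne ⟨rfl, hd⟩))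
    rwa [add_comm d, add_comm b] at this
  · have h1 := lexLt_add_left' d (h hc)
    by_cases hd : d = b
    · subst hd; exact h1
    · have := lexLt_add_left' a (h' hd)
      rw [add_comm d, add_comm b] at this
      exact lexLt_trans' h1 this

theorem IsLeadMon.mul' {n : ℕ} {k : Type*} [Field k] {f g : MvPolynomial (Fin n) k}
    {a b : Fin n →₀ ℕ} (hf : IsLeadMon f a) (hg : IsLeadMon g b) :
    IsLeadMon (f * g) (a + b) := by
  constructor
  · rw [mem_support_iff, coeff_mul, Finset.sum_eq_single (a, b)]
    · exact mul_ne_zero (mem_support_iff.1 hf.1) (mem_support_iff.1 hg.1)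
    · rintro ⟨c, d⟩ hcd hne
      rw [Finset.HasAntidiagonal.mem_antidiagonal] at hcd
      by_contra hcon
      have hc : c ∈ f.support := mem_support_iff.2 (left_ne_zero_of_mul hcon)
      have hd : d ∈ g.support := mem_support_iff.2 (right_ne_zero_of_mul hcon)
      have := lexLt_add_aux (hf.2 c hc) (hg.2 d hd) (by simpa using hne)
      simp only at hcd
      rw [hcd] at this
      exact lexLt_irrefl' this
    · intro h
      exfalso
      apply h
      rw [Finset.HasAntidiagonal.mem_antidiagonal]
  · intro e he hne
    classical
    obtain ⟨c, hc, d, hd, rfl⟩ := Finset.mem_add.1 (support_mul f g he)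
    exact lexLt_add_aux (hf.2 c hc) (hg.2 d hd) (fun h => hne (by rw [h.1, h.2]))

theorem isLeadMon_monomial' {n : ℕ} {k : Type*} [Field k] (u : Fin n →₀ ℕ) :
    IsLeadMon (monomial u (1 : k)) u := by
  classical
  constructor
  · simp [mem_support_iff]
  · intro e he hne
    rw [mem_support_iff, coeff_monomial] at he
    exact absurd (by by_contra h; exact he (if_neg (fun h' => h h'.symm))) hne

theorem isLeadMon_prod' {n : ℕ} {k : Type*} [Field k] {ι : Type*} (s : Finset ι)
    (f : ι → MvPolynomial (Fin n) k) (a : ι → Fin n →₀ ℕ)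
    (h : ∀ i ∈ s, IsLeadMon (f i) (a i)) :
    IsLeadMon (∏ i ∈ s, f i) (∑ i ∈ s, a i) := by
  classical
  induction s using Finset.induction_on with
  | empty => simpa using isLeadMon_monomial' (k := k) (0 : Fin n →₀ ℕ)
  | insert i s hi ih =>
    rw [Finset.prod_insert hi, Finset.sum_insert hi]
    exact (h i (Finset.mem_insert_self _ _)).mul'
      (ih (fun l hl => h l (Finset.mem_insert_of_mem hl)))

theorem isLeadMon_factor {n : ℕ} {k : Type*} [Field k] (m : Fin n)
    (g : MvPolynomial (Fin n) k)
    (hg : ∀ e ∈ g.support, ∀ i : Fin n, e i ≠ 0 → i < m) :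
    IsLeadMon (X m - g) (Finsupp.single m 1) := by
  classical
  have hm : ∀ e ∈ g.support, e m = 0 := fun e he => by
    by_contra h
    exact lt_irrefl _ (hg e he m h)
  constructor
  · have h0 : coeff (Finsupp.single m 1) g = 0 := by
      by_contra h
      have := hm _ (mem_support_iff.2 h)
      simp at this
    rw [mem_support_iff, coeff_sub, h0]
    simp
  · intro e he hne
    have he' : e ∈ g.support := by
      rw [mem_support_iff, coeff_sub, coeff_X', if_neg (fun h => hne h.symm)] at he
      rw [mem_support_iff]
      simpa using he
    refine ⟨m, by simp [hm e he'], fun i hi => ?_⟩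
    have : e i = 0 := by
      by_contra h
      exact lt_asymm hi (hg e he' i h)
    rw [this, Finsupp.single_eq_of_ne hi.ne']

theorem isLeadMon_F {n : ℕ} {k : Type*} [Field k] (τ : Fin n →₀ ℕ)
    (g : Fin n → ℕ → MvPolynomial (Fin n) k)
    (hg : ∀ m δ, ∀ e ∈ (g m δ).support, ∀ i : Fin n, e i ≠ 0 → i < m) :
    IsLeadMon (∏ m : Fin n, ∏ δ ∈ Finset.range (τ m), (X m - g m δ)) τ := by
  have h := isLeadMon_prod' (Finset.univ : Finset (Fin n))
    (fun m => ∏ δ ∈ Finset.range (τ m), (X m - g m δ))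
    (fun m => ∑ δ ∈ Finset.range (τ m), Finsupp.single m 1)
    (fun m _ => isLeadMon_prod' _ _ _ (fun δ _ => isLeadMon_factor m _ (hg m δ)))
  have h2 : (∑ m : Fin n, ∑ δ ∈ Finset.range (τ m), Finsupp.single m 1) = τ := by
    ext i
    simp [Finsupp.finset_sum_apply, Finsupp.single_apply]
  rwa [h2] at h

theorem supported_iff' {n : ℕ} {k : Type*} [Field k] (m : Fin n)
    (g : MvPolynomial (Fin n) k) :
    g ∈ supported k {i : Fin n | i < m} ↔
      ∀ e ∈ g.support, ∀ i : Fin n, e i ≠ 0 → i < m := by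
  rw [mem_supported]
  constructor
  · intro h e he i hi
    exact h ((mem_vars_iff_mem_support i).2 ⟨e, he, Finsupp.mem_support_iff.2 hi⟩)
  · intro h i hi
    obtain ⟨e, he, hi⟩ := (mem_vars_iff_mem_support i).1 hi
    exact h e he i (Finsupp.mem_support_iff.1 hi)

theorem eval_congr_supp {n : ℕ} {k : Type*} [Field k] (m : Fin n)
    (g : MvPolynomial (Fin n) k)
    (h : g ∈ supported k {i : Fin n | i < m}) (p q : Fin n → k)
    (hpq : ∀ i < m, p i = q i) : eval p g = eval q g := by
  rw [supported_iff'] at h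
  rw [eval_eq', eval_eq']
  refine Finset.sum_congr rfl fun e he => ?_
  congr 1
  refine Finset.prod_congr rfl fun i _ => ?_
  by_cases hi : e i = 0
  · simp [hi]
  · rw [hpq i (h e he i hi)]

theorem interp {n : ℕ} {k : Type*} [Field k] (m : Fin n) (Y : Finset (Fin n → k))
    (h : (Fin n → k) → k) (hh : ∀ p q : Fin n → k, (∀ i < m, p i = q i) → h p = h q) :
    ∃ g ∈ supported k {i : Fin n | i < m}, ∀ p ∈ Y, eval p g = h p := by
  classical
  induction Y using Finset.induction_on with
  | empty => exact ⟨0, Subalgebra.zero_mem _, by simp⟩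
  | insert p Y hp ih =>
    obtain ⟨g, hg, hgY⟩ := ih
    by_cases hex : ∃ q ∈ Y, ∀ i < m, p i = q i
    · obtain ⟨q, hq, hpq⟩ := hex
      refine ⟨g, hg, fun r hr => ?_⟩
      rcases Finset.mem_insert.1 hr with rfl | hr
      · rw [eval_congr_supp m g hg _ q hpq, hgY q hq, hh _ q hpq]
      · exact hgY r hr
    · push Not at hex
      haveI : Nonempty (Fin n) := ⟨m⟩
      choose! i hi hne using hex
      refine ⟨g + C ((h p - eval p g) / ∏ q ∈ Y, (p (i q) - q (i q))) *
        ∏ q ∈ Y, (X (i q) - C (q (i q))), ?_, ?_⟩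
      · refine Subalgebra.add_mem _ hg (Subalgebra.mul_mem _ (Subalgebra.algebraMap_mem _ _)
          (Subalgebra.prod_mem _ fun q hq => Subalgebra.sub_mem _ ?_
            (Subalgebra.algebraMap_mem _ _)))
        exact Algebra.subset_adjoin ⟨i q, hi q hq, rfl⟩
      · intro r hr
        rcases Finset.mem_insert.1 hr with rfl | hr
        · have : ∏ q ∈ Y, (r (i q) - q (i q)) ≠ 0 :=
            Finset.prod_ne_zero_iff.2 fun q hq => sub_ne_zero.2 (hne q hq)
          simp only [map_add, map_mul, map_prod, map_sub, eval_C, eval_X]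
          rw [div_mul_cancel₀ _ this]
          ring
        · simp only [map_add, map_mul, map_prod, map_sub, eval_C, eval_X]
          have hz : ∏ q ∈ Y, (r (i q) - q (i q)) = 0 :=
            Finset.prod_eq_zero hr (sub_self _)
          rw [hz, mul_zero, add_zero, hgY r hr]

/-- Number of points in a fibre over a point where the leading coefficient does not vanish. -/
theorem fibre_card {n : ℕ} {k : Type*} [Field k] (j : Fin n) (d : ℕ)
    (f : MvPolynomial (Fin n) k) (hd : ∀ e ∈ f.support, e j ≤ d)
    (hf : ∀ e ∈ f.support, ∀ i : Fin n, e i ≠ 0 → i ≤ j) (p : Fin n → k)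
    (c : MvPolynomial (Fin n) k)
    (hc : c = ∑ e ∈ f.support with e j = d, monomial (e.erase j) (coeff e f))
    (hcp : eval p c ≠ 0) (V : Finset k)
    (hV : ∀ t ∈ V, ∃ q : Fin n → k, (∀ i < j, q i = p i) ∧ q j = t ∧ eval q f = 0) :
    V.card ≤ d := by
  classical
  let u : Polynomial k := ∑ e ∈ f.support,
    Polynomial.C (coeff e f * ∏ i ∈ Finset.univ.erase j, p i ^ e i) * Polynomial.X ^ (e j)
  have hdeg : u.natDegree ≤ d :=
    Polynomial.natDegree_sum_le_of_forall_le _ _ fun e he =>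
      (Polynomial.natDegree_C_mul_X_pow_le _ _).trans (hd e he)
  have hcoef : u.coeff d = eval p c := by
    rw [hc, Polynomial.finsetSum_coeff, map_sum, Finset.sum_filter]
    refine Finset.sum_congr rfl fun e he => ?_
    rw [Polynomial.coeff_C_mul_X_pow]
    by_cases h : e j = d
    · rw [if_pos h.symm, if_pos h, eval_monomial, Finsupp.prod_fintype _ _ (by simp),
        ← Finset.mul_prod_erase _ _ (Finset.mem_univ j)]
      simp only [Finsupp.erase_same, pow_zero, one_mul]
      congr 1
      refine Finset.prod_congr rfl fun i hi => ?_
      rw [Finsupp.erase_ne (Finset.ne_of_mem_erase hi)]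
    · rw [if_neg (fun h' => h h'.symm), if_neg h]
  have hu : u ≠ 0 := fun h => hcp (by rw [← hcoef, h, Polynomial.coeff_zero])
  refine le_trans ?_ hdeg
  refine le_trans (Finset.card_le_card (t := u.roots.toFinset) ?_)
    ((Multiset.toFinset_card_le _).trans (Polynomial.card_roots' u))
  intro t ht
  obtain ⟨q, hq, rfl, h0⟩ := hV t ht
  rw [Multiset.mem_toFinset, Polynomial.mem_roots hu, Polynomial.IsRoot, ← h0, eval_eq',
    Polynomial.eval_finsetSum]
  refine Finset.sum_congr rfl fun e he => ?_
  rw [← Finset.mul_prod_erase _ _ (Finset.mem_univ j)]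
  simp only [Polynomial.eval_mul, Polynomial.eval_C, Polynomial.eval_pow, Polynomial.eval_X]
  have : ∏ i ∈ Finset.univ.erase j, p i ^ e i = ∏ i ∈ Finset.univ.erase j, q i ^ e i := by
    refine Finset.prod_congr rfl fun i hi => ?_
    by_cases hi0 : e i = 0
    · simp [hi0]
    · rw [hq i (lt_of_le_of_ne (hf e he i hi0) (Finset.ne_of_mem_erase hi))]
  rw [this]
  ring

theorem main_step {n : ℕ} {k : Type*} [Field k] (j : ℕ) (hj : j ≤ n) :
    ∀ (Y : Finset (Fin n → k)) (τ : Fin n →₀ ℕ) (f : MvPolynomial (Fin n) k),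
      (∀ e ∈ f.support, ∀ i : Fin n, e i ≠ 0 → i.val < j) → IsLeadMon f τ →
      (∀ p ∈ Y, eval p f = 0) →
      ∃ g : Fin n → ℕ → MvPolynomial (Fin n) k,
        (∀ m δ, g m δ ∈ supported k {i : Fin n | i < m}) ∧
        ∀ p ∈ Y, ∃ m, ∃ δ < τ m, p m = eval p (g m δ) := by
  classical
  induction j with
  | zero =>
    intro Y τ f hf hτ hY
    refine ⟨fun _ _ => 0, fun _ _ => Subalgebra.zero_mem _, fun p hp => ?_⟩
    exfalso
    have hz : ∀ e ∈ f.support, e = 0 := fun e he => by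
      ext i
      by_contra h
      exact absurd (hf e he i h) (Nat.not_lt_zero _)
    have h0 := hz τ hτ.1
    subst h0
    have hs : f.support = {0} := Finset.eq_singleton_iff_unique_mem.2 ⟨hτ.1, hz⟩
    have := hY p hp
    rw [eval_eq', hs] at this
    simp only [Finset.sum_singleton, Finsupp.coe_zero, Pi.zero_apply, pow_zero,
      Finset.prod_const_one, mul_one] at this
    exact mem_support_iff.1 hτ.1 this
  | succ j ih =>
    intro Y τ f hf hτ hY
    let J : Fin n := ⟨j, hj⟩
    have hfJ : ∀ e ∈ f.support, ∀ i : Fin n, e i ≠ 0 → i ≤ J := fun e he i hi =>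
      Nat.lt_succ_iff.1 (hf e he i hi)
    have hd : ∀ e ∈ f.support, e J ≤ τ J := by
      intro e he
      by_cases h : e = τ
      · rw [h]
      · obtain ⟨i, h1, h2⟩ := hτ.2 e he h
        have hi : i ≤ J := hfJ τ hτ.1 i (by omega)
        rcases hi.lt_or_eq with hi | hi
        · exact (h2 J hi).le
        · rw [← hi]; exact h1.le
    obtain ⟨c, hc⟩ : ∃ c, c = ∑ e ∈ f.support with e J = τ J,
      monomial (e.erase J) (coeff e f) := ⟨_, rfl⟩
    have hcs : ∀ e' ∈ c.support, ∃ e ∈ f.support, e J = τ J ∧ e.erase J = e' := by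
      intro e' he'
      rw [mem_support_iff, hc, coeff_sum] at he'
      obtain ⟨e, he, hne⟩ := Finset.exists_ne_zero_of_sum_ne_zero he'
      rw [Finset.mem_filter] at he
      rw [coeff_monomial] at hne
      exact ⟨e, he.1, he.2, by by_contra h; exact hne (if_neg h)⟩
    have heq : ∀ e : Fin n →₀ ℕ, e J = τ J → e.erase J = τ.erase J → e = τ := by
      intro e h1 h2
      rw [← Finsupp.single_add_erase J e, ← Finsupp.single_add_erase J τ, h1, h2]
    have hclead : IsLeadMon c (τ.erase J) := by
      constructor
      · rw [mem_support_iff, hc, coeff_sum, Finset.sum_eq_single τ]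
        · rw [coeff_monomial, if_pos rfl]
          exact mem_support_iff.1 hτ.1
        · intro e he hne
          rw [coeff_monomial, if_neg]
          exact fun h => hne (heq e (Finset.mem_filter.1 he).2 h)
        · intro h
          exact (h (Finset.mem_filter.2 ⟨hτ.1, rfl⟩)).elim
      · intro e' he' hne
        obtain ⟨e, he, h1, rfl⟩ := hcs e' he'
        obtain ⟨i, h2, h3⟩ := hτ.2 e he (fun h => hne (by rw [h]))
        have hiJ : i ≠ J := by
          rintro rfl
          omega
        refine ⟨i, by rwa [Finsupp.erase_ne hiJ, Finsupp.erase_ne hiJ], fun l hl => ?_⟩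
        by_cases hlJ : l = J
        · rw [hlJ, Finsupp.erase_same, Finsupp.erase_same]
        · rw [Finsupp.erase_ne hlJ, Finsupp.erase_ne hlJ, h3 l hl]
    have hcvar : ∀ e ∈ c.support, ∀ i : Fin n, e i ≠ 0 → i.val < j := by
      intro e' he' i hi
      obtain ⟨e, he, h1, rfl⟩ := hcs e' he'
      by_cases hiJ : i = J
      · rw [hiJ, Finsupp.erase_same] at hi
        exact absurd rfl hi
      · rw [Finsupp.erase_ne hiJ] at hi
        exact lt_of_le_of_ne (hfJ e he i hi) (fun h => hiJ (Fin.ext h))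
    obtain ⟨g, hg, hgY⟩ := ih (by omega) (Y.filter fun p => eval p c = 0) (τ.erase J) c
      hcvar hclead (fun p hp => (Finset.mem_filter.1 hp).2)
    let V : (Fin n → k) → Finset k := fun p =>
      (Y.filter fun q => ∀ i < J, q i = p i).image fun q => q J
    have hVcongr : ∀ p q : Fin n → k, (∀ i < J, p i = q i) → V p = V q := by
      intro p q hpq
      have : (Y.filter fun r => ∀ i < J, r i = p i) = Y.filter fun r => ∀ i < J, r i = q i := by
        refine Finset.filter_congr fun r _ => ?_
        exact forall₂_congr fun i hi => by rw [hpq i hi]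
      simp only [V, this]
    have hint : ∀ δ : ℕ, ∃ G ∈ supported k {i : Fin n | i < J},
        ∀ p ∈ Y, eval p G = (V p).toList.getD δ 0 := fun δ =>
      interp J Y (fun p => (V p).toList.getD δ 0) (fun p q hpq => by
        simp only [hVcongr p q hpq])
    choose G hG hGY using hint
    refine ⟨Function.update g J G, ?_, ?_⟩
    · intro m δ
      by_cases hm : m = J
      · subst hm
        rw [Function.update_self]
        exact hG δ
      · rw [Function.update_of_ne hm]
        exact hg m δ
    · intro p hp
      by_cases hcp : eval p c = 0
      · obtain ⟨m, δ, hδ, h⟩ := hgY p (Finset.mem_filter.2 ⟨hp, hcp⟩)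
        have hm : m ≠ J := by
          rintro rfl
          rw [Finsupp.erase_same] at hδ
          omega
        rw [Finsupp.erase_ne hm] at hδ
        exact ⟨m, δ, hδ, by rw [Function.update_of_ne hm]; exact h⟩
      · have hcard : (V p).card ≤ τ J := by
          refine fibre_card J (τ J) f hd hfJ p c hc hcp (V p) fun t ht => ?_
          obtain ⟨q, hq, rfl⟩ := Finset.mem_image.1 ht
          rw [Finset.mem_filter] at hq
          exact ⟨q, hq.2, rfl, hY q hq.1⟩
        have hmem : p J ∈ (V p).toList := by
          rw [Finset.mem_toList]
          exact Finset.mem_image.2 ⟨p, Finset.mem_filter.2 ⟨hp, fun _ _ => rfl⟩, rfl⟩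
        obtain ⟨δ, hδ, h⟩ := List.mem_iff_getElem.1 hmem
        have hδ' : δ < τ J := by
          rw [Finset.length_toList] at hδ
          omega
        refine ⟨J, δ, hδ', ?_⟩
        rw [Function.update_self, hGY δ p hp, List.getD_eq_getElem _ _ hδ, h]

theorem axis_of_evil {n : ℕ} {k : Type*} [Field k]
    (X : Finset (Fin n → k))
    (I : Ideal (MvPolynomial (Fin n) k))
    (hI : ∀ f, f ∈ I ↔ ∀ p ∈ X, MvPolynomial.eval p f = 0) :
    ∃ F : (Fin n →₀ ℕ) → MvPolynomial (Fin n) k,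
      (∀ τ ∈ minBasis (LTset I),
        (∃ g : Fin n → ℕ → MvPolynomial (Fin n) k,
          -- each `g m δ` only involves the variables `x_1, …, x_{m-1}`
          (∀ m : Fin n, ∀ δ : ℕ, δ < τ m →
            ∀ e ∈ (g m δ).support, ∀ i : Fin n, e i ≠ 0 → i < m) ∧
          -- the linear factorization
          F τ = ∏ m : Fin n, ∏ δ ∈ Finset.range (τ m),
            (MvPolynomial.X m - g m δ)) ∧
        F τ ∈ I ∧ IsLeadMon (F τ) τ) ∧
      -- `{F τ : τ ∈ G(T(I))}` is a Gröbner basis of `I` …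
      (∀ m : Fin n →₀ ℕ, m ∈ LTset I ↔
        ∃ τ ∈ minBasis (LTset I), ∃ u : Fin n →₀ ℕ, m = τ + u) ∧
      -- … which is minimal: no leading monomial divides another one
      (∀ τ ∈ minBasis (LTset I), ∀ τ' ∈ minBasis (LTset I), τ ≠ τ' →
        ¬ ∃ u : Fin n →₀ ℕ, τ' = τ + u) := by
  classical
  have key : ∀ τ ∈ LTset I, ∃ F : MvPolynomial (Fin n) k,
      (∃ g : Fin n → ℕ → MvPolynomial (Fin n) k,
          (∀ m : Fin n, ∀ δ : ℕ, δ < τ m →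
            ∀ e ∈ (g m δ).support, ∀ i : Fin n, e i ≠ 0 → i < m) ∧
          F = ∏ m : Fin n, ∏ δ ∈ Finset.range (τ m),
            (MvPolynomial.X m - g m δ)) ∧
        F ∈ I ∧ IsLeadMon F τ := by
    rintro τ ⟨f, hfI, _, hτ⟩
    obtain ⟨g, hg, hgX⟩ := main_step n le_rfl X τ f (fun _ _ i _ => i.2) hτ ((hI f).1 hfI)
    have hg' := fun m δ => (supported_iff' m (g m δ)).1 (hg m δ)
    refine ⟨_, ⟨g, fun m δ _ => hg' m δ, rfl⟩, ?_, isLeadMon_F τ g hg'⟩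
    rw [hI]
    intro p hp
    obtain ⟨m, δ, hδ, h⟩ := hgX p hp
    rw [map_prod]
    refine Finset.prod_eq_zero (Finset.mem_univ m) ?_
    rw [map_prod]
    refine Finset.prod_eq_zero (Finset.mem_range.2 hδ) ?_
    rw [map_sub, eval_X, h, sub_self]
  choose! F hF using key
  refine ⟨F, fun τ hτ => hF τ hτ.1, fun m => ⟨fun hm => ?_, ?_⟩, ?_⟩
  · obtain ⟨τ, ⟨hτ, u, hu⟩, hmin⟩ := WellFounded.has_min
      (wellFounded_lt (α := Fin n →₀ ℕ)) {a | a ∈ LTset I ∧ ∃ u, m = a + u}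
      ⟨m, hm, 0, by simp⟩
    refine ⟨τ, ⟨hτ, ?_⟩, u, hu⟩
    rintro m' hm' ⟨v, rfl⟩
    by_contra hne
    refine hmin m' ⟨hm', v + u, by rw [hu, add_assoc]⟩ (lt_of_le_of_ne ?_ hne)
    exact le_self_add
  · rintro ⟨τ, hτ, u, rfl⟩
    obtain ⟨_, hFI, hlead⟩ := hF τ hτ.1
    have hl := hlead.mul' (isLeadMon_monomial' (k := k) u)
    refine ⟨F τ * monomial u 1, I.mul_mem_right _ hFI, ?_, hl⟩
    intro h0
    have := hl.1
    rw [h0] at this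
    simp at this
  · rintro τ hτ τ' hτ' hne hu
    exact hne (hτ'.2 τ hτ.1 hu)
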